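/- Let f : (ℂⁿ,0) → (ℂⁿ⁺¹,0) be a finite holomorphic map germ with mult f = gd(f). Then the tangent cone C(f(ℂⁿ),0) of the image at the origin is an n-dimensional linear subspace (a hyperplane) of ℂⁿ⁺¹. -/

import Mathlib

open Filter Topology Set

noncomputable section

/-- `ℂⁿ` with its Euclidean (Hermitian) norm. -/
abbrev Cn (n : ℕ) : Type := EuclideanSpace ℂ (Fin n)

instance germAlgebra {α : Type*} (l : Filter α) : Algebra ℂ (Filter.Germ l ℂ) :=
  Algebra.ofModule
    (fun r x y => by
      induction x using Filter.Germ.inductionOn with | _ f =>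
      induction y using Filter.Germ.inductionOn with | _ g =>
      rw [← Filter.Germ.coe_smul, ← Filter.Germ.coe_mul, ← Filter.Germ.coe_mul,
        ← Filter.Germ.coe_smul, smul_mul_assoc])
    (fun r x y => by
      induction x using Filter.Germ.inductionOn with | _ f =>
      induction y using Filter.Germ.inductionOn with | _ g =>
      rw [← Filter.Germ.coe_smul, ← Filter.Germ.coe_mul, ← Filter.Germ.coe_mul,
        ← Filter.Germ.coe_smul, mul_smul_comm])

/-- The local ℂ-algebra `𝒪_n` of germs at `0` of holomorphic functions on `ℂⁿ`. -/
def Ogerm (n : ℕ) : Subalgebra ℂ (Filter.Germ (𝓝 (0 : Cn n)) ℂ) where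
  carrier := {G | ∃ g : Cn n → ℂ, AnalyticAt ℂ g 0 ∧ (g : Filter.Germ (𝓝 (0 : Cn n)) ℂ) = G}
  mul_mem' := by rintro _ _ ⟨g, hg, rfl⟩ ⟨h, hh, rfl⟩; exact ⟨g * h, hg.mul hh, rfl⟩
  add_mem' := by rintro _ _ ⟨g, hg, rfl⟩ ⟨h, hh, rfl⟩; exact ⟨g + h, hg.add hh, rfl⟩
  algebraMap_mem' := fun c => ⟨fun _ => c, analyticAt_const, by
    rw [Algebra.algebraMap_eq_smul_one, ← Filter.Germ.coe_one, ← Filter.Germ.coe_smul]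
    congr 1
    funext x
    simp⟩

/-- The ideal `⟨f⟩` of `𝒪_n` generated by the coordinate functions of `f`. -/
def coordIdeal {n p : ℕ} (f : Cn n → Cn p) : Ideal (Ogerm n) :=
  Ideal.span {G : Ogerm n | ∃ i : Fin p,
    (G : Filter.Germ (𝓝 (0 : Cn n)) ℂ) =
      ((fun x => f x i : Cn n → ℂ) : Filter.Germ (𝓝 (0 : Cn n)) ℂ)}

/-- The multiplicity `mult f = dim_ℂ 𝒪ₙ/⟨f⟩` of a map germ. -/
def multGerm {n p : ℕ} (f : Cn n → Cn p) : Cardinal :=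
  Module.rank ℂ (Ogerm n ⧸ coordIdeal f)

/-- `f` is a finite map germ: `dim_ℂ 𝒪ₙ/f^*(𝔪_p)𝒪ₙ < ∞`. -/
def FiniteGerm {n p : ℕ} (f : Cn n → Cn p) : Prop :=
  multGerm f < Cardinal.aleph0

/-- The generic degree `gd(f)`: the minimum of `dim_ℂ 𝒪ₙ/⟨π ∘ f⟩` over all surjective
linear projections `π : ℂⁿ⁺¹ → ℂⁿ`. -/
def gdGerm {n : ℕ} (f : Cn n → Cn (n+1)) : Cardinal :=
  sInf {c : Cardinal | ∃ π : Cn (n+1) →ₗ[ℂ] Cn n, Function.Surjective π ∧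
    c = multGerm (fun x => π (f x))}

/-- The tangent cone of `X` at `x`: all limits `v` of `tₖ • (xₖ - x)` with `xₖ ∈ X`,
`xₖ → x` and `tₖ ∈ ℂ`. -/
def tangentConeSet {E : Type*} [NormedAddCommGroup E] [NormedSpace ℂ E]
    (X : Set E) (x : E) : Set E :=
  {v | ∃ (xs : ℕ → E) (ts : ℕ → ℂ), (∀ k, xs k ∈ X) ∧
    Filter.Tendsto xs Filter.atTop (𝓝 x) ∧
    Filter.Tendsto (fun k => ts k • (xs k - x)) Filter.atTop (𝓝 v)}

/-!
Choose a projection `π` with `mult (π ∘ f) = gd f = mult f` and put `g = π ∘ f`. Since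
`⟨g⟩ ⊆ ⟨f⟩` have the same finite codimension, they coincide, so each coordinate of `f` is an
`𝒪ₙ`-combination of the coordinates of `g`. The values at `0` of the coefficients form a linear map
`L` with `f = L ∘ g + o(g)`; hence every tangent vector of the image lies in the range of `L`.
Conversely `g` is finite, so `0` is isolated in `g⁻¹(0)` and `g` is open at `0`. Thus `g` meets
every complex direction arbitrarily close to `0`, which makes all of `range L` tangent, and
`π ∘ L = id`, which makes its dimension `n`.
-/

section MaximumPrinciple

variable {X : Type*} {K : Set X} {ζ φ : X → ℂ} {R : ℝ}

/-- The set `K`, thought of as the graph of a multivalued function of the variable `ζ`, has near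
`p` a single-valued branch along which `φ` is holomorphic. The branch `s` is not required to be
continuous: only the holomorphy of `φ ∘ s` matters. -/
def HasHolomorphicBranchAt (K : Set X) (ζ φ : X → ℂ) (p : X) : Prop :=
  ∃ s : ℂ → X, s (ζ p) = p ∧
    ∀ᶠ z in 𝓝 (ζ p), s z ∈ K ∧ ζ (s z) = z ∧ DifferentiableAt ℂ (φ ∘ s) z

theorem HasHolomorphicBranchAt.div_pow {p : X} (h : HasHolomorphicBranchAt K ζ φ p)
    (hp : ζ p ≠ 0) (k : ℕ) : HasHolomorphicBranchAt K ζ (fun q => φ q / ζ q ^ k) p := by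
  obtain ⟨s, hsp, hs⟩ := h
  refine ⟨s, hsp, ?_⟩
  filter_upwards [hs, hs.eventually_nhds, isOpen_ne.mem_nhds hp] with z hz hz_nhds hz0
  refine ⟨hz.1, hz.2.1, ?_⟩
  have h_eq : (fun q => φ q / ζ q ^ k) ∘ s =ᶠ[𝓝 z] fun w => (φ ∘ s) w / w ^ k :=
    hz_nhds.mono fun w hw => by simp only [Function.comp_apply, hw.2.1]
  exact (hz.2.2.fun_div (differentiableAt_pow k) (pow_ne_zero k hz0)).congr_of_eventuallyEq h_eq

theorem not_isLocalMax_norm (z : ℂ) : ¬IsLocalMax (norm : ℂ → ℝ) z := fun h => by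
  have h_const : ∀ᶠ w in 𝓝 z, w = z :=
    Complex.eventually_eq_of_isLocalMax_norm (f := id) (.of_forall fun _ => differentiableAt_id) h
  obtain ⟨w, hw, hwz⟩ := ((h_const.filter_mono nhdsWithin_le_nhds).and
    (self_mem_nhdsWithin : {z}ᶜ ∈ 𝓝[≠] z)).exists
  exact hwz hw

variable [TopologicalSpace X]

/-- Among the points where `‖φ‖` is maximal, one with `‖ζ‖` maximal must lie over the circle. -/
theorem exists_isMaxOn_norm_of_hasHolomorphicBranchAt (hK : IsCompact K) (hne : K.Nonempty)
    (hζ : ContinuousOn ζ K) (hφ : ContinuousOn φ K)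
    (hbranch : ∀ p ∈ K, φ p ≠ 0 → ‖ζ p‖ < R → HasHolomorphicBranchAt K ζ φ p) :
    ∃ p ∈ K, IsMaxOn (fun q => ‖φ q‖) K p ∧ (φ p = 0 ∨ R ≤ ‖ζ p‖) := by
  obtain ⟨p₀, hp₀, hmax₀⟩ := hK.exists_isMaxOn hne hφ.norm
  let K' : Set X := {p ∈ K | ‖φ p‖ = ‖φ p₀‖}
  have hK' : IsCompact K' := by
    obtain ⟨C, hC, hCK⟩ := continuousOn_iff_isClosed.1 hφ.norm {‖φ p₀‖} isClosed_singleton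
    have : K' = K ∩ C := by
      rw [inter_comm, ← hCK, inter_comm]; rfl
    exact this ▸ hK.inter_right hC
  obtain ⟨p, ⟨hpK, hpφ⟩, hmaxζ⟩ :=
    hK'.exists_isMaxOn ⟨p₀, hp₀, rfl⟩ (hζ.mono (sep_subset _ _)).norm
  have hmax : IsMaxOn (fun q => ‖φ q‖) K p := fun q hq => (hmax₀ hq).trans_eq hpφ.symm
  refine ⟨p, hpK, hmax, ?_⟩
  by_contra! ⟨hφp, hζp⟩
  obtain ⟨s, hsp, hs⟩ := hbranch p hpK hφp hζp
  have hlocal : IsLocalMax (norm ∘ (φ ∘ s)) (ζ p) := hs.mono fun z hz => by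
    simpa only [Function.comp_apply, hsp] using isMaxOn_iff.1 hmax _ hz.1
  have hconst : ∀ᶠ z in 𝓝 (ζ p), ‖(φ ∘ s) z‖ = ‖(φ ∘ s) (ζ p)‖ :=
    Complex.norm_eventually_eq_of_isLocalMax (hs.mono fun z hz => hz.2.2) hlocal
  refine not_isLocalMax_norm (ζ p) ?_
  filter_upwards [hs, hconst] with z hz hzφ
  have hsz : s z ∈ K' := ⟨hz.1, by simpa only [Function.comp_apply, hsp, hpφ] using hzφ⟩
  simpa only [hz.2.1] using isMaxOn_iff.1 hmaxζ _ hsz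

/-- `log ‖φ‖`, maximized over the fibres of `ζ`, is a subharmonic function of `ζ` which is `-∞`
near `0`, hence identically `-∞`. The argument below is the maximum principle for
`log ‖φ‖ - k log ‖ζ‖` with `k → ∞`. -/
theorem eq_zero_of_hasHolomorphicBranchAt (hK : IsCompact K) (hζ : ContinuousOn ζ K)
    (hφ : ContinuousOn φ K) (hζ0 : ∀ p ∈ K, ζ p ≠ 0)
    (hbranch : ∀ p ∈ K, φ p ≠ 0 → ‖ζ p‖ < R → HasHolomorphicBranchAt K ζ φ p)
    {p : X} (hp : p ∈ K) (hpR : ‖ζ p‖ < R) : φ p = 0 := by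
  have hR : 0 < R := (norm_nonneg _).trans_lt hpR
  obtain ⟨M, hM⟩ := hK.exists_bound_of_continuousOn hφ
  have hM0 : 0 ≤ M := (norm_nonneg _).trans (hM p hp)
  have hbound (k : ℕ) : ‖φ p‖ ≤ M * (‖ζ p‖ / R) ^ k := by
    obtain ⟨q, hqK, hqmax, hq⟩ :=
      exists_isMaxOn_norm_of_hasHolomorphicBranchAt (φ := fun q => φ q / ζ q ^ k) hK ⟨p, hp⟩ hζ
        (hφ.div (hζ.pow k) fun q hq => pow_ne_zero k (hζ0 q hq))
        fun q hq hφq hqR => (hbranch q hq (left_ne_zero_of_mul hφq) hqR).div_pow (hζ0 q hq) k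
    have hp_pos : 0 < ‖ζ p‖ ^ k := pow_pos (norm_pos_iff.2 (hζ0 p hp)) k
    have hle : ‖φ p‖ / ‖ζ p‖ ^ k ≤ M / R ^ k := by
      calc ‖φ p‖ / ‖ζ p‖ ^ k = ‖φ p / ζ p ^ k‖ := by rw [norm_div, norm_pow]
        _ ≤ ‖φ q / ζ q ^ k‖ := hqmax hp
        _ ≤ M / R ^ k := by
          rcases hq with hq | hq
          · rw [hq, norm_zero]; positivity
          · rw [norm_div, norm_pow]; gcongr; exact hM q hqK
    calc ‖φ p‖ ≤ M / R ^ k * ‖ζ p‖ ^ k := (div_le_iff₀ hp_pos).1 hle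
      _ = M * (‖ζ p‖ / R) ^ k := by rw [div_pow]; ring
  have hlim : Tendsto (fun k : ℕ => M * (‖ζ p‖ / R) ^ k) atTop (𝓝 0) := by
    simpa only [mul_zero] using (tendsto_pow_atTop_nhds_zero_of_lt_one (by positivity)
      ((div_lt_one hR).2 hpR)).const_mul M
  exact norm_le_zero_iff.1 (ge_of_tendsto' hlim hbound)

end MaximumPrinciple

section OpenMapping

variable {E : Type*} [NormedAddCommGroup E]

/-- The graph of the multivalued function `z ↦ g⁻¹(u z)`, restricted to `K` and to `‖z‖ ≤ R`. -/
def preimageCurveGraph (g : E → E) (u : ℂ → E) (K : Set E) (R : ℝ) : Set (E × ℂ) :=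
  {p ∈ K ×ˢ Metric.closedBall 0 R | g p.1 = u p.2}

theorem isCompact_preimageCurveGraph {g : E → E} {u : ℂ → E} {K : Set E} (hK : IsCompact K)
    (hg : ContinuousOn g K) (hu : Continuous u) (R : ℝ) :
    IsCompact (preimageCurveGraph g u K R) := by
  have hc : IsCompact (K ×ˢ Metric.closedBall (0 : ℂ) R) := hK.prod (isCompact_closedBall 0 R)
  have hcont : ContinuousOn (fun p : E × ℂ => g p.1 - u p.2) (K ×ˢ Metric.closedBall 0 R) :=
    (hg.comp continuousOn_fst fun p hp => hp.1).sub (hu.comp continuous_snd).continuousOn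
  have h_eq : preimageCurveGraph g u K R =
      (K ×ˢ Metric.closedBall 0 R) ∩ (fun p : E × ℂ => g p.1 - u p.2) ⁻¹' {0} := by
    ext p; simp [preimageCurveGraph, sub_eq_zero]
  exact h_eq ▸ hc.of_isClosed_subset
    (hcont.preimage_isClosed_of_isClosed hc.isClosed isClosed_singleton) inter_subset_left

variable [NormedSpace ℂ E]

theorem exists_differentiable_local_right_inverse [CompleteSpace E] {g : E → E} {x : E}
    (hg : AnalyticAt ℂ g x) {e : E ≃L[ℂ] E} (he : HasFDerivAt g (e : E →L[ℂ] E) x) :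
    ∃ s : E → E, s (g x) = x ∧ ContinuousAt s (g x) ∧
      ∀ᶠ y in 𝓝 (g x), g (s y) = y ∧ DifferentiableAt ℂ s y := by
  have hcd : ContDiffAt ℂ 1 g x := hg.contDiffAt
  have hs : ContDiffAt ℂ 1 (hcd.localInverse he one_ne_zero) (g x) :=
    hcd.to_localInverse he one_ne_zero
  refine ⟨_, hcd.localInverse_apply_image he one_ne_zero, hs.continuousAt, ?_⟩
  filter_upwards [(hcd.hasStrictFDerivAt' he one_ne_zero).eventually_right_inverse,
    hs.eventually (by simp)] with y hy hsy
  exact ⟨hy, hsy.differentiableAt one_ne_zero⟩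

variable [FiniteDimensional ℂ E]

theorem differentiable_det :
    Differentiable ℂ fun T : E →L[ℂ] E => T.det := by
  let b := Module.finBasis ℂ E
  have h_entry (i j) : Differentiable ℂ fun T : E →L[ℂ] E => b.repr (T (b j)) i :=
    ((b.coord i).toContinuousLinearMap ∘L ContinuousLinearMap.apply ℂ E (b j)).differentiable
  have h_matrix (T : E →L[ℂ] E) : T.det = (LinearMap.toMatrix b b T).det :=
    (LinearMap.det_toMatrix b _).symm
  simp only [h_matrix, Matrix.det_apply, LinearMap.toMatrix_apply]
  fun_prop

variable {g : E → E} {K : Set E} {R : ℝ}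

theorem hasHolomorphicBranchAt_preimageCurveGraph {u : ℂ → E} (hg : AnalyticOnNhd ℂ g K)
    (hu : Differentiable ℂ u) {p : E × ℂ} (hp : g p.1 = u p.2) (hpK : p.1 ∈ interior K)
    (hpR : ‖p.2‖ < R) (hdet : (fderiv ℂ g p.1).det ≠ 0) :
    HasHolomorphicBranchAt (preimageCurveGraph g u K R) Prod.snd
      (fun q => (fderiv ℂ g q.1).det) p := by
  have hgp : AnalyticAt ℂ g p.1 := hg _ (interior_subset hpK)
  have := FiniteDimensional.complete ℂ E
  obtain ⟨s, hsp, hs_cont, hs⟩ := exists_differentiable_local_right_inverse hgp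
    (e := (fderiv ℂ g p.1).toContinuousLinearEquivOfDetNeZero hdet)
    (by simpa only [ContinuousLinearMap.coe_toContinuousLinearEquivOfDetNeZero]
      using hgp.differentiableAt.hasFDerivAt)
  rw [hp] at hsp hs_cont hs
  have hu_tendsto : Tendsto u (𝓝 p.2) (𝓝 (u p.2)) := hu.continuous.tendsto _
  have hsu_tendsto : Tendsto (s ∘ u) (𝓝 p.2) (𝓝 p.1) := by
    simpa only [ContinuousAt, hsp] using hs_cont.tendsto.comp hu_tendsto
  refine ⟨fun z => (s (u z), z), Prod.ext hsp rfl, ?_⟩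
  filter_upwards [hsu_tendsto.eventually (mem_interior_iff_mem_nhds.1 hpK),
    hu_tendsto.eventually hs, continuous_norm.continuousAt.eventually_lt_const hpR]
    with z hzK ⟨hgs, hsd⟩ hzR
  refine ⟨⟨⟨hzK, mem_closedBall_zero_iff.2 hzR.le⟩, hgs⟩, rfl, ?_⟩
  have hsud : DifferentiableAt ℂ (s ∘ u) z := hsd.comp z (hu z)
  have hfd : DifferentiableAt ℂ (fderiv ℂ g) (s (u z)) := (hg _ hzK).fderiv.differentiableAt
  have hdet_fd : DifferentiableAt ℂ (fun x => (fderiv ℂ g x).det) (s (u z)) :=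
    .comp (g := fun T : E →L[ℂ] E => T.det) _ differentiable_det.differentiableAt hfd
  have hdet_comp : DifferentiableAt ℂ ((fun x => (fderiv ℂ g x).det) ∘ s ∘ u) z :=
    hdet_fd.comp z hsud
  exact hdet_comp

theorem apply_zero_mem_image_of_det_fderiv_ne_zero {u : ℂ → E} (hK : IsCompact K)
    (hg : AnalyticOnNhd ℂ g K) (hu : Differentiable ℂ u)
    (hint : ∀ x ∈ K, ∀ z, ‖z‖ ≤ R → g x = u z → x ∈ interior K) {x : E} (hx : x ∈ K) {z : ℂ}
    (hz : ‖z‖ < R) (hxz : g x = u z) (hdet : (fderiv ℂ g x).det ≠ 0) : u 0 ∈ g '' K := by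
  by_contra hu0
  have hdet_cont : ContinuousOn (fun p : E × ℂ => (fderiv ℂ g p.1).det)
      (preimageCurveGraph g u K R) :=
    ContinuousLinearMap.continuous_det.comp_continuousOn
      (hg.fderiv.continuousOn.comp continuousOn_fst fun p hp => hp.1.1)
  refine hdet (eq_zero_of_hasHolomorphicBranchAt (p := (x, z))
    (isCompact_preimageCurveGraph hK hg.continuousOn hu.continuous R)
    continuousOn_snd hdet_cont ?_ ?_ ⟨⟨hx, mem_closedBall_zero_iff.2 hz.le⟩, hxz⟩ hz)
  · rintro ⟨y, w⟩ ⟨⟨hy, -⟩, hyw⟩ rfl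
    exact hu0 ⟨y, hy, hyw⟩
  · rintro ⟨y, w⟩ ⟨⟨hy, -⟩, hyw⟩ hφ hwR
    exact hasHolomorphicBranchAt_preimageCurveGraph hg hu hyw
      (hint y hy w hwR.le hyw) hwR hφ

/-- Test on the complex line through `g c` and the point to be covered. -/
theorem ball_subset_image_closedBall_of_det_fderiv_ne_zero {c : E} {r ε : ℝ} (hr : 0 < r)
    (hg : AnalyticOnNhd ℂ g (Metric.closedBall c r))
    (hε : ∀ x ∈ Metric.sphere c r, ε ≤ ‖g x - g c‖) (hdet : (fderiv ℂ g c).det ≠ 0) :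
    Metric.ball (g c) (ε / 2) ⊆ g '' Metric.closedBall c r := by
  intro y hy
  rw [mem_ball_iff_norm] at hy
  let u : ℂ → E := fun z => y + z • (g c - y)
  obtain ⟨R, hR1, hR⟩ : ∃ R : ℝ, 1 < R ∧ (1 + R) * ‖y - g c‖ < ε := by
    have hcont : ContinuousAt (fun R : ℝ => (1 + R) * ‖y - g c‖) 1 := by fun_prop
    have h1 : (1 + 1) * ‖y - g c‖ < ε := by linarith
    exact ((hcont.eventually_lt_const h1).filter_mono nhdsWithin_le_nhds |>.and
      (self_mem_nhdsWithin : Ioi (1 : ℝ) ∈ 𝓝[>] 1)).exists.imp fun R h => ⟨h.2, h.1⟩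
  have hu_near (z : ℂ) (hz : ‖z‖ ≤ R) : ‖u z - g c‖ < ε := by
    calc ‖u z - g c‖ = ‖(1 - z) • (y - g c)‖ := by congr 1; module
      _ ≤ (1 + R) * ‖y - g c‖ := by
        rw [norm_smul]
        gcongr
        exact (norm_sub_le _ _).trans (by rw [norm_one]; gcongr)
      _ < ε := hR
  have hint : ∀ x ∈ Metric.closedBall c r, ∀ z, ‖z‖ ≤ R → g x = u z →
      x ∈ interior (Metric.closedBall c r) := fun x hx z hz hxz => by
    refine Metric.ball_subset_interior_closedBall
      ((Metric.mem_closedBall.1 hx).lt_of_ne fun h => ?_)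
    exact (hu_near z hz).not_ge (hxz ▸ hε x h)
  have := FiniteDimensional.proper ℂ E
  simpa [u] using apply_zero_mem_image_of_det_fderiv_ne_zero (u := u)
    (isCompact_closedBall c r) hg (by fun_prop) hint (Metric.mem_closedBall_self hr.le) (z := 1)
    (by rwa [norm_one]) (by simp [u]) hdet

theorem eventually_det_add_smul_one_ne_zero (T : E →L[ℂ] E) :
    ∀ᶠ ε : ℂ in 𝓝[≠] 0, (T + ε • (1 : E →L[ℂ] E)).det ≠ 0 := by
  have hfin : (spectrum ℂ (-T : Module.End ℂ E)).Finite := Module.End.finite_spectrum _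
  have hnhds : (spectrum ℂ (-T : Module.End ℂ E) \ {0})ᶜ ∈ 𝓝 0 :=
    hfin.sdiff.isClosed.isOpen_compl.mem_nhds (by simp)
  filter_upwards [nhdsWithin_le_nhds hnhds, self_mem_nhdsWithin] with ε hε hε0
  have hunit : IsUnit (algebraMap ℂ (Module.End ℂ E) ε - -T) :=
    spectrum.notMem_iff.1 fun h => hε ⟨h, hε0⟩
  have h_eq : ((T + ε • (1 : E →L[ℂ] E) : E →L[ℂ] E) : Module.End ℂ E) =
      algebraMap ℂ (Module.End ℂ E) ε - -T := by
    ext x; simp [add_comm]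
  exact (h_eq ▸ (LinearMap.isUnit_iff_isUnit_det _).1 hunit).ne_zero

/-- Finitely many `η` are eigenvalues of `-g'(c)`, so `g` is a uniform limit of the maps
`x ↦ g x + η • (x - c)` with invertible derivative at `c`. -/
theorem ball_subset_image_closedBall {c : E} {r ε : ℝ} (hr : 0 < r)
    (hg : AnalyticOnNhd ℂ g (Metric.closedBall c r))
    (hε : ∀ x ∈ Metric.sphere c r, ε ≤ ‖g x - g c‖) :
    Metric.ball (g c) (ε / 2) ⊆ g '' Metric.closedBall c r := by
  have := FiniteDimensional.proper ℂ E
  intro y hy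
  have hclosed : IsClosed (g '' Metric.closedBall c r) :=
    ((isCompact_closedBall c r).image_of_continuousOn hg.continuousOn).isClosed
  rw [← hclosed.closure_eq, Metric.mem_closure_iff]
  intro δ hδ
  have h_cont1 : ContinuousAt (fun η : ℂ => ‖η‖ * r) 0 := by fun_prop
  have h_cont2 : ContinuousAt (fun η : ℂ => (ε - ‖η‖ * r) / 2) 0 := by fun_prop
  obtain ⟨η, ⟨hηδ, hηy⟩, hη⟩ := (((h_cont1.eventually_lt_const (by simpa using hδ)).and
    (h_cont2.eventually_const_lt (u := dist y (g c)) (by simpa using hy))).filter_mono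
      nhdsWithin_le_nhds |>.and (eventually_det_add_smul_one_ne_zero (fderiv ℂ g c))).exists
  let gη : E → E := fun x => g x + η • (x - c)
  have hgη_c : gη c = g c := by simp [gη]
  have hgη : AnalyticOnNhd ℂ gη (Metric.closedBall c r) := fun x hx =>
    (hg x hx).fun_add (analyticAt_const.fun_smul (analyticAt_id.fun_sub analyticAt_const))
  have hgη_det : (fderiv ℂ gη c).det ≠ 0 := by
    have : HasFDerivAt gη (fderiv ℂ g c + η • (1 : E →L[ℂ] E)) c :=
      (hg c (Metric.mem_closedBall_self hr.le)).differentiableAt.hasFDerivAt.add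
        (((hasFDerivAt_id c).sub_const c).const_smul η)
    rwa [this.fderiv]
  have hnorm (x) (hx : x ∈ Metric.closedBall c r) : ‖gη x - g x‖ ≤ ‖η‖ * r := by
    rw [add_sub_cancel_left, norm_smul]
    gcongr
    exact mem_closedBall_iff_norm.1 hx
  have hgη_sphere : ∀ x ∈ Metric.sphere c r, ε - ‖η‖ * r ≤ ‖gη x - gη c‖ := fun x hx => by
    have h1 := hε x hx
    have h2 := hnorm x (Metric.sphere_subset_closedBall hx)
    have h3 := norm_sub_le_norm_sub_add_norm_sub (g x) (gη x) (g c)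
    rw [norm_sub_rev (g x) (gη x)] at h3
    rw [hgη_c]
    linarith
  obtain ⟨x, hx, rfl⟩ := ball_subset_image_closedBall_of_det_fderiv_ne_zero hr hgη hgη_sphere
    hgη_det (by rwa [hgη_c])
  exact ⟨g x, mem_image_of_mem g hx, (dist_eq_norm _ _).trans_lt ((hnorm x hx).trans_lt hηδ)⟩

theorem nhds_le_map_nhds_of_isolated {c : E} (hg : AnalyticAt ℂ g c)
    (hc : ∀ᶠ x in 𝓝 c, g x = g c → x = c) : 𝓝 (g c) ≤ map g (𝓝 c) := by
  have := FiniteDimensional.proper ℂ E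
  obtain ⟨r₀, hr₀, hball⟩ := Metric.nhds_basis_closedBall.eventually_iff.1
    (hg.eventually_analyticAt.and hc)
  rw [Metric.nhds_basis_closedBall.map g |>.ge_iff]
  intro r₁ hr₁
  let r := min r₀ r₁
  have hr : 0 < r := lt_min hr₀ hr₁
  have hball_r : ∀ x ∈ Metric.closedBall c r, AnalyticAt ℂ g x ∧ (g x = g c → x = c) :=
    fun x hx => hball (Metric.closedBall_subset_closedBall (min_le_left _ _) hx)
  have hne : ∀ x ∈ Metric.sphere c r, 0 < ‖g x - g c‖ := fun x hx =>
    norm_pos_iff.2 <| sub_ne_zero.2 fun h => Metric.ne_of_mem_sphere hx hr.ne'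
      ((hball_r x (Metric.sphere_subset_closedBall hx)).2 h)
  have hcont : ContinuousOn (fun x => ‖g x - g c‖) (Metric.sphere c r) := fun x hx =>
    ((hball_r x (Metric.sphere_subset_closedBall hx)).1.continuousAt.sub
      continuousAt_const).norm.continuousWithinAt
  obtain ⟨ε, hε0, hε⟩ := (isCompact_sphere c r).exists_forall_le' hcont hne
  refine mem_of_superset (Metric.ball_mem_nhds _ (half_pos hε0)) ?_
  calc Metric.ball (g c) (ε / 2) ⊆ g '' Metric.closedBall c r :=
        ball_subset_image_closedBall hr (fun x hx => (hball_r x hx).1) hε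
    _ ⊆ g '' Metric.closedBall c r₁ :=
        image_mono (Metric.closedBall_subset_closedBall (min_le_right _ _))

end OpenMapping

section GermIdeals

open Asymptotics

theorem ideal_eq_of_le_of_rank_quotient_eq {k R : Type*} [Field k] [CommRing R] [Algebra k R]
    {I J : Ideal R} (hle : J ≤ I) (hfin : Module.rank k (R ⧸ I) < Cardinal.aleph0)
    (hrank : Module.rank k (R ⧸ J) = Module.rank k (R ⧸ I)) : J = I := by
  have : FiniteDimensional k (R ⧸ I) := Module.rank_lt_aleph0_iff.1 hfin
  have : FiniteDimensional k (R ⧸ J) := Module.rank_lt_aleph0_iff.1 (hrank ▸ hfin)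
  have hinj : Function.Injective (Ideal.Quotient.factorₐ k hle).toLinearMap :=
    (LinearMap.injective_iff_surjective_of_finrank_eq_finrank
      (by rw [Module.finrank, hrank, Module.finrank])).2 (Ideal.Quotient.factor_surjective hle)
  refine hle.antisymm fun G hG => ?_
  rw [← Ideal.Quotient.eq_zero_iff_mem] at hG ⊢
  exact hinj (by simpa only [map_zero] using! hG)

theorem exists_aeval_mem_ideal {k R : Type*} [Field k] [CommRing R] [Algebra k R] {I : Ideal R}
    (hfin : Module.rank k (R ⧸ I) < Cardinal.aleph0) (x : R) :
    ∃ P : Polynomial k, P ≠ 0 ∧ Polynomial.aeval x P ∈ I := by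
  have : FiniteDimensional k (R ⧸ I) := Module.rank_lt_aleph0_iff.1 hfin
  obtain ⟨P, hP0, hP⟩ := Algebra.IsAlgebraic.isAlgebraic (R := k) (Ideal.Quotient.mk I x)
  refine ⟨P, hP0, ?_⟩
  rw [← Ideal.Quotient.eq_zero_iff_mem, ← hP]
  exact (Polynomial.aeval_algHom_apply (Ideal.Quotient.mkₐ k I) x P).symm

variable {n p q : ℕ}

/-- The element of `𝒪ₙ` represented by a function that is analytic at `0`. -/
def Ogerm.ofAnalyticAt (h : Cn n → ℂ) (hh : AnalyticAt ℂ h 0) : Ogerm n := ⟨h, h, hh, rfl⟩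

theorem Ogerm.aeval_ofAnalyticAt {h : Cn n → ℂ} (hh : AnalyticAt ℂ h 0) (P : Polynomial ℂ) :
    Polynomial.aeval (ofAnalyticAt h hh) P =
      ofAnalyticAt (fun x => Polynomial.aeval (h x) P) (hh.aeval_polynomial P) := by
  induction P using Polynomial.induction_on' with
  | add P Q hP hQ => simp only [map_add, hP, hQ]; rfl
  | monomial k c =>
    simp only [Polynomial.aeval_monomial, ← Algebra.smul_def]
    exact Subtype.ext rfl

theorem linearForm_comp_mem_coordIdeal {f : Cn n → Cn p} (hf : AnalyticAt ℂ f 0)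
    (ℓ : Cn p →L[ℂ] ℂ) :
    Ogerm.ofAnalyticAt (fun x => ℓ (f x)) ((ℓ.analyticAt _).comp hf) ∈ coordIdeal f := by
  let germ : (Cn p →L[ℂ] ℂ) →ₗ[ℂ] Ogerm n :=
    { toFun ℓ := Ogerm.ofAnalyticAt (fun x => ℓ (f x)) ((ℓ.analyticAt _).comp hf)
      map_add' _ _ := rfl
      map_smul' _ _ := rfl }
  have hℓ : ℓ = ∑ i, ℓ (EuclideanSpace.single i 1) • EuclideanSpace.proj i := by
    ext x
    conv_lhs => rw [← (EuclideanSpace.basisFun (Fin p) ℂ).sum_repr x]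
    simp [mul_comm]
  change germ ℓ ∈ coordIdeal f
  rw [hℓ, map_sum]
  refine sum_mem fun i _ => ?_
  rw [map_smul]
  exact Submodule.smul_of_tower_mem _ _ (Ideal.subset_span ⟨i, rfl⟩)

theorem coordIdeal_comp_le {f : Cn n → Cn p} (hf : AnalyticAt ℂ f 0) (π : Cn p →L[ℂ] Cn q) :
    coordIdeal (fun x => π (f x)) ≤ coordIdeal f := by
  refine Ideal.span_le.2 ?_
  rintro G ⟨i, hi⟩
  have hG : G = Ogerm.ofAnalyticAt _ (((EuclideanSpace.proj i ∘L π).analyticAt _).comp hf) :=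
    Subtype.ext hi
  exact hG ▸ linearForm_comp_mem_coordIdeal hf (EuclideanSpace.proj i ∘L π)

theorem exists_linearForm_isLittleO_of_mem_coordIdeal {g : Cn n → Cn p} {G : Ogerm n}
    (hG : G ∈ coordIdeal g) {h : Cn n → ℂ} (hh : (h : Germ (𝓝 (0 : Cn n)) ℂ) = G) :
    ∃ ℓ : Cn p →L[ℂ] ℂ, (fun x => h x - ℓ (g x)) =o[𝓝 0] g := by
  induction hG using Submodule.span_induction generalizing h with
  | mem G hG =>
    obtain ⟨i, hi⟩ := hG
    have hhi : h =ᶠ[𝓝 0] fun x => g x i := Germ.coe_eq.1 (hh.trans hi)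
    refine ⟨EuclideanSpace.proj i, (isLittleO_zero g (𝓝 0)).congr' ?_ .rfl⟩
    filter_upwards [hhi] with x hx
    simp [hx]
  | zero =>
    have hh0 : h =ᶠ[𝓝 0] 0 := Germ.coe_eq.1 hh
    exact ⟨0, (isLittleO_zero g (𝓝 0)).congr' (hh0.symm.trans (by simp)) .rfl⟩
  | add G₁ G₂ _ _ ih₁ ih₂ =>
    obtain ⟨h₁, -, hG₁⟩ := G₁.2
    obtain ⟨h₂, -, hG₂⟩ := G₂.2
    obtain ⟨ℓ₁, hℓ₁⟩ := ih₁ hG₁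
    obtain ⟨ℓ₂, hℓ₂⟩ := ih₂ hG₂
    have hsum : h =ᶠ[𝓝 0] h₁ + h₂ := Germ.coe_eq.1 <| by
      rw [hh, Germ.coe_add, hG₁, hG₂, Subalgebra.coe_add]
    refine ⟨ℓ₁ + ℓ₂, (hℓ₁.add hℓ₂).congr' ?_ .rfl⟩
    filter_upwards [hsum] with x hx
    simp only [hx, Pi.add_apply, add_apply]
    ring
  | smul c G _ ih =>
    obtain ⟨γ, hγ, hc⟩ := c.2
    obtain ⟨k, -, hG⟩ := G.2
    obtain ⟨ℓ, hℓ⟩ := ih hG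
    have hmul : h =ᶠ[𝓝 0] γ * k := Germ.coe_eq.1 <| by
      rw [hh, Germ.coe_mul, hc, hG, smul_eq_mul, Subalgebra.coe_mul]
    have hbounded : (fun x => γ x * (k x - ℓ (g x))) =o[𝓝 0] g := by
      simpa using (hγ.continuousAt.isBigO_one ℝ).mul_isLittleO hℓ.norm_right
    have hvanish : (fun x => (γ x - γ 0) * ℓ (g x)) =o[𝓝 0] g := by
      have hγ0 : (fun x => γ x - γ 0) =o[𝓝 0] (1 : Cn n → ℝ) :=
        (isLittleO_one_iff ℝ).2 (tendsto_sub_nhds_zero_iff.2 hγ.continuousAt)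
      simpa using hγ0.mul_isBigO (ℓ.isBigO_comp g (𝓝 0)).norm_right
    refine ⟨γ 0 • ℓ, (hbounded.add hvanish).congr' ?_ .rfl⟩
    filter_upwards [hmul] with x hx
    simp only [hx, Pi.mul_apply, smul_apply, smul_eq_mul]
    ring

theorem isBigO_of_mem_coordIdeal {g : Cn n → Cn p} {h : Cn n → ℂ} {hh : AnalyticAt ℂ h 0}
    (hmem : Ogerm.ofAnalyticAt h hh ∈ coordIdeal g) : h =O[𝓝 0] g := by
  obtain ⟨ℓ, hℓ⟩ := exists_linearForm_isLittleO_of_mem_coordIdeal hmem rfl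
  simpa only [sub_add_cancel] using hℓ.isBigO.add (ℓ.isBigO_comp g _)

theorem eventually_eq_of_eval_eq_zero {k : Type*} [Field k] [TopologicalSpace k] [T1Space k]
    {P : Polynomial k} (hP : P ≠ 0) (a : k) : ∀ᶠ z in 𝓝 a, P.eval z = 0 → z = a := by
  have hroots : (P.rootSet k \ {a}).Finite := (P.rootSet_finite k).sdiff
  filter_upwards [hroots.isClosed.isOpen_compl.mem_nhds (by simp)] with z hz hPz
  by_contra hza
  exact hz ⟨by simpa [Polynomial.mem_rootSet, hP] using hPz, hza⟩

theorem FiniteGerm.eventually_eq_zero {g : Cn n → Cn p} (hg : FiniteGerm g) :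
    ∀ᶠ x in 𝓝 0, g x = 0 → x = 0 := by
  have hcoord (i : Fin n) : ∀ᶠ x in 𝓝 (0 : Cn n), g x = 0 → x i = 0 := by
    let proj : Cn n →L[ℂ] ℂ := EuclideanSpace.proj i
    obtain ⟨P, hP0, hP⟩ := exists_aeval_mem_ideal hg
      (Ogerm.ofAnalyticAt proj (proj.analyticAt 0))
    rw [Ogerm.aeval_ofAnalyticAt] at hP
    have hroot : ∀ᶠ x in 𝓝 (0 : Cn n), P.eval (proj x) = 0 → proj x = 0 :=
      (proj.continuous.tendsto' 0 0 (map_zero proj)).eventually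
        (eventually_eq_of_eval_eq_zero hP0 0)
    filter_upwards [(isBigO_of_mem_coordIdeal hP).eq_zero_imp, hroot] with x hx hx_root hgx
    exact hx_root (hx hgx)
  filter_upwards [eventually_all.2 hcoord] with x hx hgx
  ext i
  exact hx i hgx

theorem exists_linearMap_isLittleO_of_coordIdeal_le {f : Cn n → Cn p} {g : Cn n → Cn q}
    (hf : AnalyticAt ℂ f 0) (hle : coordIdeal f ≤ coordIdeal g) :
    ∃ L : Cn q →L[ℂ] Cn p, (fun x => f x - L (g x)) =o[𝓝 0] g := by
  have hcoord (i : Fin p) : ∃ ℓ : Cn q →L[ℂ] ℂ, (fun x => f x i - ℓ (g x)) =o[𝓝 0] g :=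
    exists_linearForm_isLittleO_of_mem_coordIdeal
      (hle (linearForm_comp_mem_coordIdeal hf (EuclideanSpace.proj i))) rfl
  choose ℓ hℓ using hcoord
  let e : (Fin p → ℂ) →L[ℂ] Cn p := (EuclideanSpace.equiv (Fin p) ℂ).symm
  refine ⟨e ∘L .pi ℓ, ?_⟩
  exact (e.isBigO_comp (fun x i => f x i - ℓ i (g x)) _).trans_isLittleO (isLittleO_pi.2 hℓ)

theorem exists_surjective_linearMap (n : ℕ) :
    ∃ π : Cn (n + 1) →ₗ[ℂ] Cn n, Function.Surjective π := by
  let ofFun : (Fin n → ℂ) ≃ₗ[ℂ] Cn n := (WithLp.linearEquiv 2 ℂ _).symm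
  let toFun : Cn (n + 1) ≃ₗ[ℂ] (Fin (n + 1) → ℂ) := WithLp.linearEquiv 2 ℂ _
  exact ⟨ofFun.toLinearMap ∘ₗ LinearMap.funLeft ℂ ℂ Fin.castSucc ∘ₗ toFun.toLinearMap,
    ofFun.surjective.comp ((LinearMap.funLeft_surjective_of_injective ℂ ℂ _
      (Fin.castSucc_injective n)).comp toFun.surjective)⟩

theorem exists_projection_finiteGerm_coordIdeal_eq {f : Cn n → Cn (n + 1)}
    (hf : AnalyticAt ℂ f 0) (hfin : FiniteGerm f) (hmult : multGerm f = gdGerm f) :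
    ∃ π : Cn (n + 1) →L[ℂ] Cn n,
      FiniteGerm (fun x => π (f x)) ∧ coordIdeal (fun x => π (f x)) = coordIdeal f := by
  obtain ⟨π₀, hπ₀⟩ := exists_surjective_linearMap n
  obtain ⟨π, -, hπ⟩ : gdGerm f ∈ {c | ∃ π : Cn (n + 1) →ₗ[ℂ] Cn n, Function.Surjective π ∧
    c = multGerm fun x => π (f x)} := csInf_mem ⟨_, π₀, hπ₀, rfl⟩
  have hmult_π : multGerm (fun x => π (f x)) = multGerm f := (hmult.trans hπ).symm
  exact ⟨π.toContinuousLinearMap, hmult_π.trans_lt hfin,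
    ideal_eq_of_le_of_rank_quotient_eq (coordIdeal_comp_le hf π.toContinuousLinearMap) hfin
      hmult_π⟩

end GermIdeals

section TangentCone

open Asymptotics

theorem tangentConeSet_eq_tangentConeAt {E : Type*} [NormedAddCommGroup E] [NormedSpace ℂ E]
    (X : Set E) (x : E) : tangentConeSet X x = tangentConeAt ℂ X x := by
  ext v
  rw [mem_tangentConeAt_iff_exists_seq]
  constructor
  · rintro ⟨xs, ts, hxs, hx, hv⟩
    exact ⟨ts, fun k => xs k - x, tendsto_sub_nhds_zero_iff.2 hx,
      .of_forall fun k => by rw [add_sub_cancel]; exact hxs k, hv⟩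
  · rintro ⟨c, d, hd, hdX, hv⟩
    obtain ⟨N, hN⟩ := eventually_atTop.1 hdX
    have hshift : Tendsto (· + N) atTop atTop := tendsto_add_atTop_nat N
    refine ⟨fun k => x + d (k + N), fun k => c (k + N), fun k => hN _ le_add_self, ?_, ?_⟩
    · simpa only [add_zero, Function.comp_def] using (hd.comp hshift).const_add x
    · simpa only [add_sub_cancel_left, Function.comp_def] using hv.comp hshift

theorem nhdsWithin_image_le_map_nhds {X Y : Type*} [TopologicalSpace X] [TopologicalSpace Y]
    [T2Space Y] {f : X → Y} {K : Set X} {c : X} (hK : IsCompact K) (hf : ContinuousOn f K)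
    (hc : ∀ x ∈ K, f x = f c → x = c) : 𝓝[f '' K] (f c) ≤ map f (𝓝 c) := by
  rw [nhdsWithin, ← map_principal, inf_comm, ← Filter.push_pull]
  refine map_mono (hK.le_nhds_of_unique_clusterPt (mem_inf_of_left (mem_principal_self K))
    fun x hx hcluster => hc x hx ?_)
  have hne : (𝓝[K] x ⊓ comap f (𝓝 (f c))).NeBot := by
    simpa only [ClusterPt, nhdsWithin, inf_assoc] using hcluster
  exact tendsto_nhds_unique ((hf x hx).mono_left inf_le_left)
    (tendsto_comap.mono_left inf_le_right)

variable {𝕜 E F α : Type*} [NontriviallyNormedField 𝕜] [NormedAddCommGroup E] [NormedSpace 𝕜 E]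
  [NormedAddCommGroup F] [NormedSpace 𝕜 F]

theorem tangentConeAt_subset_range_of_hasFDerivWithinAt_id {s : Set F} {y : F} {A : F →L[𝕜] F}
    (hA : HasFDerivWithinAt id A s y) : tangentConeAt 𝕜 s y ⊆ range A := fun v hv =>
  ⟨v, hA.unique_on (hasFDerivWithinAt_id y s) hv⟩

theorem eq_id_of_isLittleO_sub {l : Filter α} {g : α → E} {A : E →L[𝕜] E}
    (hg : 𝓝 0 ≤ map g l) (hA : (fun x => g x - A (g x)) =o[l] g) :
    A = ContinuousLinearMap.id 𝕜 E := by
  have hlittle : (fun y => y - A y) =o[𝓝 0] id := (isLittleO_map.2 hA).mono hg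
  have hderiv : HasFDerivAt id A (0 : E) := .of_isLittleO <| by
    simpa only [id, sub_zero] using! hlittle
  exact hderiv.unique (hasFDerivAt_id 0)

theorem frequently_exists_smul_eq (w : E) : ∃ᶠ y in 𝓝 (0 : E), ∃ t : 𝕜, t • y = w := by
  have hsmul : Tendsto (fun c : 𝕜 => c • w) (𝓝[≠] 0) (𝓝 0) :=
    (Continuous.tendsto' (by fun_prop) 0 0 (zero_smul 𝕜 w)).mono_left nhdsWithin_le_nhds
  refine hsmul.frequently (Eventually.frequently ?_)
  filter_upwards [self_mem_nhdsWithin] with c hc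
  exact ⟨c⁻¹, inv_smul_smul₀ hc w⟩

variable {f : α → F} {g : α → E} {L : E →L[𝕜] F} {l : Filter α}

theorem range_subset_tangentConeAt_image {U : Set α} (hU : U ∈ l) (hf : Tendsto f l (𝓝 0))
    (hg : 𝓝 0 ≤ map g l) (hL : (fun x => f x - L (g x)) =o[l] g) :
    range L ⊆ tangentConeAt 𝕜 (f '' U) 0 := by
  rintro _ ⟨w, rfl⟩
  let S : Set α := {x | ∃ t : 𝕜, t • g x = w}
  have hS : (l ⊓ 𝓟 S).NeBot :=
    frequently_iff_neBot.1 (frequently_map.1 ((frequently_exists_smul_eq w).filter_mono hg))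
  have hS_mem : S ∈ l ⊓ 𝓟 S := mem_inf_of_right (mem_principal_self S)
  have hS_scale : ∀ x ∈ S, ∃ t : 𝕜, t • g x = w := fun x hx => hx
  choose! t ht using hS_scale
  have ht_tendsto : Tendsto (fun x => t x • g x) (l ⊓ 𝓟 S) (𝓝 w) :=
    tendsto_const_nhds.congr' (eventually_of_mem hS_mem fun x hx => (ht x hx).symm)
  have herror : Tendsto (fun x => t x • (f x - L (g x))) (l ⊓ 𝓟 S) (𝓝 0) :=
    (isLittleO_one_iff ℝ).1 <| ((isBigO_refl t _).smul_isLittleO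
      (hL.mono inf_le_left)).trans_isBigO (ht_tendsto.isBigO_one ℝ)
  refine mem_tangentConeAt_of_seq (l ⊓ 𝓟 S) t f (hf.mono_left inf_le_left) ?_ ?_
  · filter_upwards [mem_inf_of_left hU] with x hx
    exact ⟨x, hx, (zero_add _).symm⟩
  · simpa only [smul_sub, map_smul, sub_add_cancel, zero_add, Function.comp_def] using
      herror.add ((L.continuous.tendsto w).comp ht_tendsto)

theorem hasFDerivWithinAt_id_of_isLittleO {π : F →L[𝕜] E} {s : Set F} (hs : 𝓝[s] 0 ≤ map f l)
    (hL : (fun x => f x - L (π (f x))) =o[l] fun x => π (f x)) :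
    HasFDerivWithinAt id (L ∘L π) s 0 := .of_isLittleO <| by
  have hlittle : (fun y => y - L (π y)) =o[𝓝[s] 0] π := (isLittleO_map.2 hL).mono hs
  simpa only [id, map_zero, sub_zero] using! hlittle.trans_isBigO (π.isBigO_id _)

theorem tangentConeAt_image_eq_range {π : F →L[𝕜] E} {U : Set α} (hU : U ∈ l)
    (hf : Tendsto f l (𝓝 0)) (himage : 𝓝[f '' U] 0 ≤ map f l) (hopen : 𝓝 0 ≤ map (π ∘ f) l)
    (hL : (fun x => f x - L (π (f x))) =o[l] fun x => π (f x)) :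
    tangentConeAt 𝕜 (f '' U) 0 = range L :=
  ((tangentConeAt_subset_range_of_hasFDerivWithinAt_id
    (hasFDerivWithinAt_id_of_isLittleO himage hL)).trans (range_comp_subset_range π L)).antisymm
    (range_subset_tangentConeAt_image hU hf hopen hL)

theorem finrank_range_of_isLittleO {π : F →L[𝕜] E} (hopen : 𝓝 0 ≤ map (π ∘ f) l)
    (hL : (fun x => f x - L (π (f x))) =o[l] fun x => π (f x)) :
    Module.finrank 𝕜 L.range = Module.finrank 𝕜 E := by
  have hπL : π ∘L L = ContinuousLinearMap.id 𝕜 E := eq_id_of_isLittleO_sub hopen <| by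
    simpa only [Function.comp_def, map_sub] using! (π.isBigO_comp _ l).trans_isLittleO hL
  exact LinearMap.finrank_range_of_inj
    (Function.LeftInverse.injective (g := π) fun w => DFunLike.congr_fun hπL w)

end TangentCone

/-- If `f : (ℂⁿ,0) → (ℂⁿ⁺¹,0)` is a finite holomorphic map germ with
`mult f = gd f`, then the tangent cone of the image at the origin is an `n`-dimensional
linear subspace (a hyperplane) of `ℂⁿ⁺¹`. -/
theorem tangent_cone_of_image_is_hyperplane (n : ℕ) (f : Cn n → Cn (n+1))
    (hf0 : f 0 = 0) (hfa : AnalyticAt ℂ f 0) (hfin : FiniteGerm f)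
    (hmg : multGerm f = gdGerm f) :
    ∃ U : Set (Cn n), IsOpen U ∧ 0 ∈ U ∧
      ∃ L : Submodule ℂ (Cn (n+1)), Module.finrank ℂ L = n ∧
        tangentConeSet (f '' U) 0 = (L : Set (Cn (n+1))) := by
  obtain ⟨π, hπ_fin, hπ_ideal⟩ := exists_projection_finiteGerm_coordIdeal_eq hfa hfin hmg
  obtain ⟨L, hL⟩ := exists_linearMap_isLittleO_of_coordIdeal_le hfa hπ_ideal.ge
  have hπf0 : π (f 0) = 0 := by rw [hf0, map_zero]
  have hisolated : ∀ᶠ x in 𝓝 0, π (f x) = 0 → x = 0 := hπ_fin.eventually_eq_zero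
  have hopen : 𝓝 0 ≤ map (π ∘ f) (𝓝 0) := by
    simpa only [Function.comp_apply, hπf0] using nhds_le_map_nhds_of_isolated
      ((π.analyticAt _).comp hfa) (by simpa only [Function.comp_apply, hπf0] using hisolated)
  obtain ⟨r, hr, hball⟩ := Metric.nhds_basis_closedBall.eventually_iff.1
    (hfa.eventually_analyticAt.and hisolated)
  have himage : 𝓝[f '' Metric.closedBall 0 r] (f 0) ≤ map f (𝓝 0) :=
    nhdsWithin_image_le_map_nhds (isCompact_closedBall 0 r)
      (fun x hx => (hball hx).1.continuousAt.continuousWithinAt)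
      fun x hx hfx => (hball hx).2 (by rw [hfx, hπf0])
  rw [hf0] at himage
  have hcone : tangentConeAt ℂ (f '' Metric.ball 0 r) 0 = range L :=
    tangentConeAt_image_eq_range (Metric.ball_mem_nhds 0 hr)
      (hf0 ▸ hfa.continuousAt.tendsto)
      ((nhdsWithin_mono _ (image_mono Metric.ball_subset_closedBall)).trans himage) hopen hL
  refine ⟨Metric.ball 0 r, Metric.isOpen_ball, Metric.mem_ball_self hr, L.range, ?_, ?_⟩
  · rw [finrank_range_of_isLittleO hopen hL, finrank_euclideanSpace_fin]
  · exact (tangentConeSet_eq_tangentConeAt _ _).trans hcone
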